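/- Assume in addition that A(0) + A(0) ⊆ A(0) (Minkowski sum). For a claim C : Ω → ℝ^d define the set of superhedging portfolios SHP(C) = {p ∈ ℝ^d : C ∈ A(p)} and the set of subhedging portfolios SubHP(C) = −SHP(−C). Then SHP(C) ⊆ P^s(C) and SubHP(C) ⊆ P^b(C). -/

import Mathlib

open Pointwise

/-! Translation property and `A 0 + A 0 ⊆ A 0` together make `A` superadditive. A hedger may
therefore add a superhedging position to any position available from the initial endowment; the
hedge cancels the claim, so every utility vector attainable without the claim stays attainable. -/

section Superadditive

variable {G L : Type*} [AddGroup G] [AddCommGroup L]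

theorem add_subset_of_translation {A : G → Set L} (ι : G →+ L)
    (hAtr : ∀ x, ∀ W ∈ A x, ∀ c, W + ι c ∈ A (x + c)) (hAadd : A 0 + A 0 ⊆ A 0) (x y : G) :
    A x + A y ⊆ A (x + y) := by
  rintro _ ⟨W, hW, Z, hZ, rfl⟩
  have hW₀ : W + ι (-x) ∈ A 0 := by simpa only [add_neg_cancel] using hAtr x W hW (-x)
  have hZ₀ : Z + ι (-y) ∈ A 0 := by simpa only [add_neg_cancel] using hAtr y Z hZ (-y)
  have hsum : W + ι (-x) + (Z + ι (-y)) + ι (x + y) ∈ A (0 + (x + y)) :=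
    hAtr 0 _ (hAadd (Set.add_mem_add hW₀ hZ₀)) (x + y)
  have hcancel : W + ι (-x) + (Z + ι (-y)) + ι (x + y) = W + Z := by
    simp only [map_neg, map_add]
    abel
  rwa [hcancel, zero_add] at hsum

end Superadditive

section Prices

variable {G L E : Type*}

/-- The superhedging portfolios `SHP(C)`: the endowments from which `C` itself is available. -/
def superhedging (A : G → Set L) (C : L) : Set G :=
  {p | C ∈ A p}

/-- The subhedging portfolios `SubHP(C)`, the buyer's counterpart of `superhedging`. -/
def subhedging [Neg G] [Neg L] (A : G → Set L) (C : L) : Set G :=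
  -superhedging A (-C)

/-- The value set `V(x, C)` of an investor endowed with `x` and `C`. The condition `v ≤ U (W + C)`
encodes the free disposal of utility, `U(W + C) - ℝ^q_+` in the case `E = ℝ^q`. -/
def valueSet [Add L] [LE E] [TopologicalSpace E] (U : L → E) (A : G → Set L) (x : G) (C : L) :
    Set E :=
  closure {v | ∃ W ∈ A x, v ≤ U (W + C)}

variable [AddGroup G] [AddGroup L] [LE E] [TopologicalSpace E]

/-- The set-valued buy price `P^b(C)`: the amounts `p` that an investor with endowment `x₀` can pay
for `C` without losing any attainable utility. -/
def buyPrice (U : L → E) (A : G → Set L) (x₀ : G) (C : L) : Set G :=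
  {p | valueSet U A x₀ 0 ⊆ valueSet U A (x₀ - p) C}

/-- The set-valued sell price `P^s(C)`: the amounts `p` for which an investor with endowment `x₀`
can deliver `C` without losing any attainable utility. -/
def sellPrice (U : L → E) (A : G → Set L) (x₀ : G) (C : L) : Set G :=
  {p | valueSet U A x₀ 0 ⊆ valueSet U A (x₀ + p) (-C)}

theorem neg_sellPrice_neg (U : L → E) (A : G → Set L) (x₀ : G) (C : L) :
    -sellPrice U A x₀ (-C) = buyPrice U A x₀ C := by
  ext p
  simp only [sellPrice, buyPrice, Set.mem_neg, Set.mem_ofPred_eq, neg_neg, sub_eq_add_neg]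

variable {A : G → Set L}

theorem valueSet_add_subset (U : L → E) (hA : ∀ x y, A x + A y ⊆ A (x + y)) {p : G} {Z : L}
    (hZ : Z ∈ A p) (x : G) (C : L) :
    valueSet U A x (Z + C) ⊆ valueSet U A (x + p) C := by
  refine closure_mono ?_
  rintro v ⟨W, hW, hv⟩
  exact ⟨W + Z, hA x p (Set.add_mem_add hW hZ), by rwa [add_assoc]⟩

theorem superhedging_subset_sellPrice (U : L → E) (hA : ∀ x y, A x + A y ⊆ A (x + y)) (x₀ : G)
    (C : L) : superhedging A C ⊆ sellPrice U A x₀ C := by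
  intro p (hp : C ∈ A p)
  change valueSet U A x₀ 0 ⊆ valueSet U A (x₀ + p) (-C)
  rw [← add_neg_cancel C]
  exact valueSet_add_subset U hA hp x₀ (-C)

theorem subhedging_subset_buyPrice (U : L → E) (hA : ∀ x y, A x + A y ⊆ A (x + y)) (x₀ : G)
    (C : L) : subhedging A C ⊆ buyPrice U A x₀ C := by
  rw [← neg_sellPrice_neg]
  exact Set.neg_subset_neg.mpr (superhedging_subset_sellPrice U hA x₀ (-C))

end Prices

/- The homomorphism `ι` embeds the deterministic portfolios into the claims, as constant functions
or, say, as classes of constant functions modulo null sets. -/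
theorem stmt17_general {G L E : Type*} [AddGroup G] [AddCommGroup L] [LE E] [TopologicalSpace E]
    (U : L → E) {A : G → Set L} (ι : G →+ L)
    (hAtr : ∀ x, ∀ W ∈ A x, ∀ c, W + ι c ∈ A (x + c)) (hAadd : A 0 + A 0 ⊆ A 0)
    (x₀ : G) (C : L) :
    superhedging A C ⊆ sellPrice U A x₀ C ∧ subhedging A C ⊆ buyPrice U A x₀ C :=
  have hA := add_subset_of_translation ι hAtr hAadd
  ⟨superhedging_subset_sellPrice U hA x₀ C, subhedging_subset_buyPrice U hA x₀ C⟩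

theorem stmt17
    {d r s : ℕ} (hd : 0 < d) (hr : 0 < r) (hs : 0 < s)
    {Ω : Type} [Fintype Ω] [Nonempty Ω]
    (Q : Fin s → Ω → ℝ)
    (hQ0 : ∀ j ω, 0 ≤ Q j ω) (hQ1 : ∀ j, ∑ ω : Ω, Q j ω = 1)
    (u : Fin r → (Fin d → ℝ) → ℝ)
    (hcont : ∀ i, Continuous (u i))
    (hconc : ∀ i, ConcaveOn ℝ Set.univ (u i))
    (hmono : ∀ i, Monotone (u i))
    (hstrict : ∀ i (x y : Fin d → ℝ), (∀ k, x k < y k) → u i x < u i y)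
    (A : (Fin d → ℝ) → Set (Ω → Fin d → ℝ))
    (hAtr : ∀ (x : Fin d → ℝ) (W : Ω → Fin d → ℝ), W ∈ A x →
      ∀ c : Fin d → ℝ, (fun ω => W ω + c) ∈ A (x + c))
    (hAadd : A 0 + A 0 ⊆ A 0)
    (x0 : Fin d → ℝ) :
    let U : (Ω → Fin d → ℝ) → (Fin r × Fin s → ℝ) :=
      fun W ij => ∑ ω : Ω, Q ij.2 ω * u ij.1 (W ω)
    let V : (Fin d → ℝ) → (Ω → Fin d → ℝ) → Set (Fin r × Fin s → ℝ) :=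
      fun x C => closure {v | ∃ W ∈ A x, v ≤ U (W + C)}
    let Pb : (Ω → Fin d → ℝ) → Set (Fin d → ℝ) :=
      fun C => {p | V x0 0 ⊆ V (x0 - p) C}
    let Ps : (Ω → Fin d → ℝ) → Set (Fin d → ℝ) :=
      fun C => {p | V x0 0 ⊆ V (x0 + p) (-C)}
    let SHP : (Ω → Fin d → ℝ) → Set (Fin d → ℝ) := fun C => {p | C ∈ A p}
    ∀ C : Ω → Fin d → ℝ, SHP C ⊆ Ps C ∧ -SHP (-C) ⊆ Pb C := by
  intro U _ _ _ _ C
  exact stmt17_general U (Pi.constAddMonoidHom Ω (Fin d → ℝ)) hAtr hAadd x0 C
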